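/- Let K be a field and let (b_{s,j})_{s ∈ ℤ, 1 ≤ j ≤ 3} be an array over K such that, for every s ∈ ℤ, the 3×3 matrix g(s) with rows (b_{s,1}, b_{s,2}, b_{s,3}), (b_{s+1,1}, b_{s+1,2}, b_{s+1,3}), (b_{s+2,1}, b_{s+2,2}, b_{s+2,3}) has determinant 1. For s ∈ ℤ set Δ₁^{(s)} := b_{s+2,3} and Δ₂^{(s)} := b_{s+1,2}·b_{s+2,3} − b_{s+2,2}·b_{s+1,3}, and assume Δ₁^{(s)} ≠ 0 and Δ₂^{(s)} ≠ 0 for all s. Then for every s ∈ ℤ, the (1,1) entry of g(s)·g(s+1)⁻¹ equals Δ₂^{(s+1)}/Δ₂^{(s)} + (Δ₁^{(s)}·Δ₂^{(s−1)})/(Δ₁^{(s−1)}·Δ₂^{(s)}) + Δ₁^{(s−2)}/Δ₁^{(s−1)}. (This is the SL(3) instance of the identity θ^{(s)}₁ = l₁^{(s)} + l₂^{(s−1)} + l₃^{(s−2)} expressing the q-character of the fundamental module via the discrete Miura transformation.) -/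

import Mathlib

/-- for an `(SL(3), c)`-band given by an array `(b_{s,j})` over a field `K`, with
`Δ₁^{(s)} = b_{s+2,3}` and `Δ₂^{(s)} = b_{s+1,2}·b_{s+2,3} − b_{s+2,2}·b_{s+1,3}` all nonzero,
the `(1,1)` entry of `g(s)·g(s+1)⁻¹` equals
`Δ₂^{(s+1)}/Δ₂^{(s)} + Δ₁^{(s)}Δ₂^{(s−1)}/(Δ₁^{(s−1)}Δ₂^{(s)}) + Δ₁^{(s−2)}/Δ₁^{(s−1)}`. -/
theorem stmt_19 (K : Type*) [Field K] (b : ℤ → Fin 3 → K)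
    (hdet : ∀ s : ℤ, (Matrix.of fun i j : Fin 3 => b (s + (i : ℕ)) j).det = 1)
    (Δ₁ Δ₂ : ℤ → K)
    (hΔ₁ : ∀ s : ℤ, Δ₁ s = b (s + 2) 2)
    (hΔ₂ : ∀ s : ℤ, Δ₂ s = b (s + 1) 1 * b (s + 2) 2 - b (s + 2) 1 * b (s + 1) 2)
    (h1 : ∀ s : ℤ, Δ₁ s ≠ 0) (h2 : ∀ s : ℤ, Δ₂ s ≠ 0) (s : ℤ) :
    ((Matrix.of fun i j : Fin 3 => b (s + (i : ℕ)) j) *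
        (Matrix.of fun i j : Fin 3 => b (s + 1 + (i : ℕ)) j)⁻¹) 0 0 =
      Δ₂ (s + 1) / Δ₂ s + Δ₁ s * Δ₂ (s - 1) / (Δ₁ (s - 1) * Δ₂ s) +
        Δ₁ (s - 2) / Δ₁ (s - 1) := by
  have hd0 := hdet s
  have hd1 := hdet (s + 1)
  have k1 := h1 (s - 1)
  have k2 := h2 s
  rw [Matrix.inv_def, hd1, Ring.inverse_one, one_smul, Matrix.adjugate_fin_three]
  rw [Matrix.det_fin_three] at hd0 hd1
  simp only [hΔ₁, hΔ₂] at k1 k2 ⊢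
  have e1 : s + 1 + 1 = s + 2 := by ring
  have e2 : s + 1 + 2 = s + 3 := by ring
  have e3 : s - 1 + 2 = s + 1 := by ring
  have e4 : s - 1 + 1 = s := by ring
  have e5 : s - 2 + 2 = s := by ring
  simp only [Matrix.mul_apply, Fin.sum_univ_three, Matrix.of_apply, Matrix.cons_val', Matrix.cons_val_zero,
    Matrix.cons_val_one, Matrix.cons_val, Fin.val_zero, Fin.val_one, Fin.val_two, Nat.cast_zero,
    Nat.cast_one, Nat.cast_ofNat, add_zero, e1, e2, e3, e4, e5] at hd0 hd1 k1 k2 ⊢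
  generalize b s = p at *
  generalize b (s + 1) = q at *
  generalize b (s + 2) = r at *
  generalize b (s + 3) = t at *
  rw [div_add_div _ _ k2 (mul_ne_zero k1 k2), div_add_div _ _ (mul_ne_zero k2 (mul_ne_zero k1 k2)) k1,
    eq_div_iff (mul_ne_zero (mul_ne_zero k2 (mul_ne_zero k1 k2)) k1)]
  linear_combination (q 2 ^ 2 * (q 1 * r 2 - r 1 * q 2)) *
    ((p 1 * r 2 - r 1 * p 2) * hd1 + (r 1 * t 2 - t 1 * r 2) * hd0)
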